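/- Let (Ω,F,P) be a probability space with expectation E, T > 0, and let u : Ω × [0,T] × D → ℝ³ be jointly measurable with E ∫_0^T ‖u(t)‖²_{L²(D)} dt < ∞, extended by zero outside D. Define Γ^{ij}(t,h) := E ∫_D ψ(x) u^i(t,x) u^j(t,x+h) dx for i,j ∈ {1,2,3}. Then each map h ↦ (1/T)∫_0^T Γ^{ij}(t,h) dt is bounded and continuous on ℝ³. If moreover u(t,·,ω) ∈ H¹_0(D;ℝ³) for a.e. (t,ω) and E ∫_0^T ‖u(t)‖²_{H¹(D)} dt < ∞, then each map h ↦ (1/T)∫_0^T Γ^{ij}(t,h) dt is twice continuously differentiable on ℝ³. (This is Lemma 2.2.) -/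

import Mathlib

open MeasureTheory Metric Real Topology Filter ENNReal

noncomputable section

abbrev V3 : Type := EuclideanSpace ℝ (Fin 3)

/-- The `i`-th partial derivative of a scalar function on `ℝ³`. -/
def pd (i : Fin 3) (f : V3 → ℝ) (x : V3) : ℝ := fderiv ℝ f x (EuclideanSpace.single i 1)

/-- The two-point correlation tensor `Γ^{ij}(t,h) = E ∫_D ψ(x) u^i(t,x) u^j(t,x+h) dx`. -/
def Gam {Ω : Type*} [MeasurableSpace Ω] (μ : Measure Ω) (D : Set V3) (ψ : V3 → ℝ)
    (u : Ω → ℝ → V3 → V3) (i j : Fin 3) (t : ℝ) (h : V3) : ℝ :=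
  ∫ ω, (∫ x in D, ψ x * (u ω t x i * u ω t (x + h) j)) ∂μ

/-- Continuity of the correlation of two `L²` functions on `ℝ³`. -/
lemma fiber_continuous (a b : V3 → ℝ) (ha : MemLp a 2 (volume : Measure V3))
    (hb : MemLp b 2 (volume : Measure V3)) :
    Continuous (fun h : V3 => ∫ x, a x * b (x + h)) := by
  have hS : ∀ h : V3, MeasurePreserving (fun x : V3 => h +ᵥ x) volume volume := fun h =>
    measurePreserving_vadd h volume
  have key : ∀ h : V3, ∫ x, a x * b (x + h) =
      inner ℝ (ha.toLp a) ((DomAddAct.mk h : V3ᵈᵃᵃ) +ᵥ hb.toLp b) := by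
    intro h
    rw [DomAddAct.mk_vadd_toLp, L2.inner_def]
    refine integral_congr_ae ?_
    filter_upwards [ha.coeFn_toLp, (hb.comp_measurePreserving (hS h)).coeFn_toLp] with x h1 h2
    simp only [Function.comp_def] at h2
    rw [h1]
    erw [h2]
    simp [vadd_eq_add, add_comm, mul_comm]
  simp_rw [key]
  have : Fact ((2 : ℝ≥0∞) ≠ ⊤) := ⟨by simp⟩
  have : Continuous (fun h : V3 => (DomAddAct.mk h : V3ᵈᵃᵃ) +ᵥ hb.toLp b) := by
    have h1 : Continuous (fun h : V3 => (DomAddAct.mk h : V3ᵈᵃᵃ)) := DomAddAct.continuous_mk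
    exact h1.vadd continuous_const
  exact continuous_const.inner this

section corr
variable {Q : Type*} [MeasurableSpace Q] {ν : Measure Q} [SFinite ν]

/-- Correlation of two functions on `Q × ℝ³`. -/
def CC (ν : Measure Q) (a b : Q × V3 → ℝ) (h : V3) : ℝ :=
  ∫ p, a p * b (p.1, p.2 + h) ∂(ν.prod volume)

lemma shift_mp (ν : Measure Q) [SFinite ν] (h : V3) :
    MeasurePreserving (fun p : Q × V3 => (p.1, p.2 + h)) (ν.prod volume) (ν.prod volume) :=
  (MeasurePreserving.id ν).prod (measurePreserving_add_right volume h)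

lemma CC_integrable {a b : Q × V3 → ℝ} (ha : MemLp a 2 (ν.prod volume))
    (hb : MemLp b 2 (ν.prod volume)) (h : V3) :
    Integrable (fun p : Q × V3 => a p * b (p.1, p.2 + h)) (ν.prod volume) :=
  ha.integrable_mul (hb.comp_measurePreserving (shift_mp ν h))

lemma CC_norm_le {a b : Q × V3 → ℝ} (ha : MemLp a 2 (ν.prod volume))
    (hb : MemLp b 2 (ν.prod volume)) (h : V3) :
    ∫ p, ‖a p * b (p.1, p.2 + h)‖ ∂(ν.prod volume) ≤
      ∫ p, (a p ^ 2 + b p ^ 2) ∂(ν.prod volume) := by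
  have hb' : MemLp (fun p : Q × V3 => b (p.1, p.2 + h)) 2 (ν.prod volume) :=
    hb.comp_measurePreserving (shift_mp ν h)
  rw [integral_add ha.integrable_sq hb.integrable_sq]
  have : ∫ p, b p ^ 2 ∂(ν.prod volume) = ∫ p : Q × V3, b (p.1, p.2 + h) ^ 2 ∂(ν.prod volume) := by
    rw [← (shift_mp ν h).integral_comp' (f := ((MeasurableEquiv.refl Q).prodCongr
      (MeasurableEquiv.addRight h))) (g := fun p => b p ^ 2)]
    rfl
  rw [this, ← integral_add ha.integrable_sq hb'.integrable_sq]
  refine integral_mono (CC_integrable ha hb h).norm (ha.integrable_sq.add hb'.integrable_sq) ?_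
  intro p
  simp only [Real.norm_eq_abs, abs_mul]
  nlinarith [sq_nonneg (|a p| - |b (p.1, p.2 + h)|), sq_abs (a p), sq_abs (b (p.1, p.2 + h)),
    sq_nonneg (a p), sq_nonneg (b (p.1, p.2 + h))]

lemma CC_bdd {a b : Q × V3 → ℝ} (ha : MemLp a 2 (ν.prod volume))
    (hb : MemLp b 2 (ν.prod volume)) (h : V3) :
    |CC ν a b h| ≤ ∫ p, (a p ^ 2 + b p ^ 2) ∂(ν.prod volume) :=
  (norm_integral_le_integral_norm _).trans (CC_norm_le ha hb h)

lemma CC_symm (a b : Q × V3 → ℝ) (h : V3) : CC ν a b h = CC ν b a (-h) := by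
  unfold CC
  rw [← (shift_mp ν h).integral_comp' (f := ((MeasurableEquiv.refl Q).prodCongr
      (MeasurableEquiv.addRight h))) (g := fun p => b p * a (p.1, p.2 + -h))]
  refine integral_congr_ae (ae_of_all _ fun p => ?_)
  have e : ((MeasurableEquiv.refl Q).prodCongr (MeasurableEquiv.addRight h)) p =
      (p.1, p.2 + h) := rfl
  simp only [e]
  simp [mul_comm]

lemma fiber_memLp {a : Q × V3 → ℝ} (hm : Measurable a) (ha : MemLp a 2 (ν.prod volume)) :
    ∀ᵐ q ∂ν, MemLp (fun x => a (q, x)) 2 (volume : Measure V3) := by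
  filter_upwards [ha.integrable_sq.prod_right_ae] with q hq
  exact (memLp_two_iff_integrable_sq (hm.comp measurable_prodMk_left).aestronglyMeasurable).2 hq

lemma CC_continuous {a b : Q × V3 → ℝ} (hma : Measurable a) (hmb : Measurable b)
    (ha : MemLp a 2 (ν.prod volume))
    (hb : MemLp b 2 (ν.prod volume)) : Continuous (CC ν a b) := by
  have h1 : CC ν a b = fun h => ∫ q, (∫ x, a (q, x) * b (q, x + h)) ∂ν := by
    funext h
    exact integral_prod _ (CC_integrable ha hb h)
  rw [h1]
  refine continuous_of_dominated
    (bound := fun q => ∫ x, (a (q, x) ^ 2 + b (q, x) ^ 2)) ?_ ?_ ?_ ?_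
  · intro h
    exact (CC_integrable ha hb h).aestronglyMeasurable.integral_prod_right'
  · intro h
    filter_upwards [fiber_memLp hma ha, fiber_memLp hmb hb] with q h1 h2
    have h2' : MemLp (fun x => b (q, x + h)) 2 (volume : Measure V3) :=
      h2.comp_measurePreserving (measurePreserving_add_right volume h)
    rw [integral_add h1.integrable_sq h2.integrable_sq]
    rw [← integral_add_right_eq_self (fun x => b (q, x) ^ 2) h,
      ← integral_add h1.integrable_sq h2'.integrable_sq]
    refine (norm_integral_le_integral_norm _).trans ?_
    refine integral_mono (h1.integrable_mul h2').norm
      (h1.integrable_sq.add h2'.integrable_sq) ?_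
    intro x
    simp only [Real.norm_eq_abs, abs_mul]
    nlinarith [sq_nonneg (|a (q, x)| - |b (q, x + h)|), sq_abs (a (q, x)), sq_abs (b (q, x + h)),
      sq_nonneg (a (q, x)), sq_nonneg (b (q, x + h))]
  · exact (ha.integrable_sq.add hb.integrable_sq).integral_prod_left
  · filter_upwards [fiber_memLp hma ha, fiber_memLp hmb hb] with q h1 h2
    exact fiber_continuous _ _ h1 h2

end corr

/-- `F` has weak partial derivatives `G k`. -/
def IsWeak (F : V3 → ℝ) (G : V3 → ℝ) (k : Fin 3) : Prop :=
  ∀ φ : V3 → ℝ, ContDiff ℝ (⊤ : ℕ∞) φ → HasCompactSupport φ →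
    ∫ x, F x * pd k φ x = - ∫ x, G x * φ x

/-- The linear form with given coordinates. -/
def lform (c : Fin 3 → ℝ) : V3 →L[ℝ] ℝ := ∑ k, c k • EuclideanSpace.proj k

lemma lform_apply (c : Fin 3 → ℝ) (v : V3) : lform c v = ∑ k, c k * v k := by
  simp [lform]

lemma lform_continuous : Continuous lform := by
  unfold lform; fun_prop

lemma clm_eq_lform (L : V3 →L[ℝ] ℝ) : L = lform (fun k => L (EuclideanSpace.single k 1)) := by
  ext v
  rw [lform_apply]
  have hv : v = ∑ k, v k • EuclideanSpace.single k (1 : ℝ) := by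
    ext i; simp [Finset.sum_apply, Pi.single_apply]
  conv_lhs => rw [hv]
  rw [map_sum]
  refine Finset.sum_congr rfl fun k _ => ?_
  rw [map_smul, smul_eq_mul, mul_comm]

lemma pd_reflect (k : Fin 3) (ρ : V3 → ℝ) (hρ : ContDiff ℝ (⊤ : ℕ∞) ρ) (x y : V3) :
    pd k (fun y => ρ (x - y)) y = - pd k ρ (x - y) := by
  unfold pd
  have h1 : HasFDerivAt ρ (fderiv ℝ ρ (x - y)) (x - y) :=
    (hρ.differentiable (by simp)).differentiableAt.hasFDerivAt
  have h2 : HasFDerivAt (fun y : V3 => x - y) (-ContinuousLinearMap.id ℝ V3) y :=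
    (hasFDerivAt_id y).const_sub x
  have h3 : HasFDerivAt (fun y => ρ (x - y)) _ y := h1.comp y h2
  rw [h3.fderiv]
  simp

lemma hasFDerivAt_of_weak (F : V3 → ℝ) (G : Fin 3 → V3 → ℝ) (hF : Continuous F)
    (hG : ∀ k, Continuous (G k)) (hw : ∀ k, IsWeak F (G k) k) (x : V3) :
    HasFDerivAt F (lform (fun k => G k x)) x := by
  let B : ℕ → ContDiffBump (0 : V3) := fun n =>
    { rIn := 1 / (n + 1) / 2
      rOut := 1 / (n + 1)
      rIn_pos := by positivity
      rIn_lt_rOut := half_lt_self (by positivity) }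
  have hB : Tendsto (fun n => (B n).rOut) atTop (𝓝 0) := tendsto_one_div_add_atTop_nhds_zero_nat
  let ρ : ℕ → V3 → ℝ := fun n => (B n).normed volume
  have hρ : ∀ n, ContDiff ℝ (⊤ : ℕ∞) (ρ n) := fun n => (B n).contDiff_normed
  have hρc : ∀ n, HasCompactSupport (ρ n) := fun n => (B n).hasCompactSupport_normed
  let L := ContinuousLinearMap.lsmul ℝ ℝ (E := ℝ)
  have swap : ∀ (n : ℕ) (g : V3 → ℝ) (y : V3),
      convolution g (ρ n) L volume y = convolution (ρ n) g L volume y := by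
    intro n g y
    simp only [convolution_def]
    rw [← integral_sub_left_eq_self _ volume y]
    simp [L, mul_comm]
  have conv : ∀ (g : V3 → ℝ), Continuous g → ∀ y : V3,
      Tendsto (fun p : ℕ × V3 => convolution g (ρ p.1) L volume p.2) (atTop ×ˢ 𝓝 y) (𝓝 (g y)) := by
    intro g hg y
    simp_rw [swap]
    refine ContDiffBump.convolution_tendsto_right (φ := fun p : ℕ × V3 => B p.1)
      (g := fun _ => g) (k := fun p => p.2) (hB.comp tendsto_fst)
      (Eventually.of_forall fun _ => hg.aestronglyMeasurable) ?_ tendsto_snd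
    exact (hg.tendsto y).comp tendsto_snd
  have deriv : ∀ (n : ℕ) (y : V3), HasFDerivAt (convolution F (ρ n) L volume)
      (lform (fun k => convolution (G k) (ρ n) L volume y)) y := by
    intro n y
    have h1 := (hρc n).hasFDerivAt_convolution_right L hF.locallyIntegrable (μ := volume)
      ((hρ n).of_le (by norm_cast)) y
    suffices heq : lform (fun k => convolution (G k) (ρ n) L volume y) =
        convolution F (fderiv ℝ (ρ n)) (ContinuousLinearMap.precompR V3 L) volume y by
      rw [heq]; exact h1
    rw [clm_eq_lform (convolution F (fderiv ℝ (ρ n)) _ volume y)]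
    congr 1
    funext k
    rw [convolution_precompR_apply L hF.locallyIntegrable ((hρc n).fderiv ℝ)
      ((hρ n).continuous_fderiv (by simp))]
    have hc : HasCompactSupport (fun z => ρ n (y - z)) :=
      (hρc n).comp_homeomorph (Homeomorph.subLeft y)
    have := hw k (fun z => ρ n (y - z)) ((hρ n).comp (contDiff_const.sub contDiff_id)) hc
    simp_rw [pd_reflect k (ρ n) (hρ n)] at this
    simp only [mul_neg, integral_neg, neg_inj] at this
    simp only [convolution_def]
    simpa [L, pd] using this.symm
  refine hasFDerivAt_of_tendstoUniformlyOnFilter (𝕜 := ℝ) (l := (atTop : Filter ℕ))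
    (f := fun n => convolution F (ρ n) L volume)
    (f' := fun n y => lform (fun k => convolution (G k) (ρ n) L volume y))
    (g' := fun y => lform (fun k => G k y)) ?_ (Eventually.of_forall fun p => deriv p.1 p.2) ?_
  · have h1 : Tendsto (fun p : ℕ × V3 => lform (fun k => convolution (G k) (ρ p.1) L volume p.2))
        (atTop ×ˢ 𝓝 x) (𝓝 (lform fun k => G k x)) :=
      (lform_continuous.tendsto _).comp (tendsto_pi_nhds.2 fun k => conv (G k) (hG k) x)
    have h2 : Tendsto (fun p : ℕ × V3 => lform (fun k => G k p.2))
        (atTop ×ˢ 𝓝 x) (𝓝 (lform fun k => G k x)) := by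
      have : Continuous (fun y => lform (fun k => G k y)) :=
        lform_continuous.comp (continuous_pi hG)
      exact (this.tendsto x).comp tendsto_snd
    rw [tendstoUniformlyOnFilter_iff_tendsto]
    have := (h2.prodMk_nhds h1)
    exact this.mono_right (nhds_le_uniformity _)
  · refine Eventually.of_forall fun y => ?_
    have h1 : Tendsto (fun n : ℕ => (n, y)) atTop (atTop ×ˢ 𝓝 y) :=
      Tendsto.prodMk tendsto_id tendsto_const_nhds
    have h2 := conv F hF y
    have h3 := Tendsto.comp h2 h1
    exact h3

section corr2
variable {Q : Type*} [MeasurableSpace Q] {ν : Measure Q} [SFinite ν]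

lemma CC_fubini {a b : Q × V3 → ℝ} (hma : Measurable a) (hmb : Measurable b)
    (ha : MemLp a 2 (ν.prod volume)) (hb : MemLp b 2 (ν.prod volume))
    (g : V3 → ℝ) (hg : Continuous g) (hgc : HasCompactSupport g) :
    ∫ h, CC ν a b h * g h =
      ∫ p, a p * (∫ h, b (p.1, p.2 + h) * g h) ∂(ν.prod volume) := by
  have hgi : Integrable g := hg.integrable_of_hasCompactSupport hgc
  have hm : Measurable (fun z : (Q × V3) × V3 => a z.1 * b (z.1.1, z.1.2 + z.2) * g z.2) := by
    have := hg.measurable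
    fun_prop
  have hint : Integrable (fun z : (Q × V3) × V3 => a z.1 * b (z.1.1, z.1.2 + z.2) * g z.2)
      ((ν.prod volume).prod volume) := by
    rw [integrable_prod_iff' hm.aestronglyMeasurable]
    refine ⟨ae_of_all _ fun h => (CC_integrable ha hb h).mul_const (g h), ?_⟩
    refine Integrable.mono' (hgi.norm.const_mul
      (∫ p, (a p ^ 2 + b p ^ 2) ∂(ν.prod volume))) ?_ (ae_of_all _ fun h => ?_)
    · exact (hm.norm.stronglyMeasurable.integral_prod_left').aestronglyMeasurable
    · rw [Real.norm_of_nonneg (integral_nonneg fun _ => norm_nonneg _)]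
      simp_rw [norm_mul _ (g h)]
      rw [integral_mul_const]
      exact mul_le_mul_of_nonneg_right (CC_norm_le ha hb h) (norm_nonneg _)
  have h1 := integral_integral_swap (f := fun (p : Q × V3) (h : V3) =>
    a p * b (p.1, p.2 + h) * g h) hint
  unfold CC
  simp_rw [← integral_mul_const, ← integral_const_mul]
  rw [← h1]
  simp_rw [mul_assoc]

lemma pd_shift (k : Fin 3) (φ : V3 → ℝ) (x y : V3) :
    pd k (fun y => φ (y - x)) y = pd k φ (y - x) := by
  unfold pd
  rw [fderiv_comp_sub]

lemma CC_weak {a b bk : Q × V3 → ℝ} (hma : Measurable a) (hmb : Measurable b)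
    (hmbk : Measurable bk)
    (ha : MemLp a 2 (ν.prod volume)) (hb : MemLp b 2 (ν.prod volume))
    (hbk : MemLp bk 2 (ν.prod volume)) (k : Fin 3)
    (hw : ∀ φ : V3 → ℝ, ContDiff ℝ (⊤ : ℕ∞) φ → HasCompactSupport φ →
      ∀ᵐ q ∂ν, ∫ x, b (q, x) * pd k φ x = - ∫ x, bk (q, x) * φ x) :
    IsWeak (CC ν a b) (CC ν a bk) k := by
  intro φ hφ hφc
  have hpc : Continuous (pd k φ) := by
    have := hφ.continuous_fderiv (by simp)
    unfold pd
    fun_prop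
  have hps : HasCompactSupport (pd k φ) := hφc.fderiv_apply ℝ _
  rw [CC_fubini hma hmb ha hb _ hpc hps, CC_fubini hma hmbk ha hbk _ hφ.continuous hφc,
    ← integral_neg]
  refine integral_congr_ae ?_
  have hm1 : Measurable (fun p : Q × V3 => ∫ h, b (p.1, p.2 + h) * pd k φ h) := by
    have : Measurable (fun z : (Q × V3) × V3 => b (z.1.1, z.1.2 + z.2) * pd k φ z.2) := by
      have := hpc.measurable
      fun_prop
    exact this.stronglyMeasurable.integral_prod_right'.measurable
  have hm2 : Measurable (fun p : Q × V3 => - ∫ h, bk (p.1, p.2 + h) * φ h) := by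
    have : Measurable (fun z : (Q × V3) × V3 => bk (z.1.1, z.1.2 + z.2) * φ z.2) := by
      have := hφ.continuous.measurable
      fun_prop
    exact this.stronglyMeasurable.integral_prod_right'.measurable.neg
  have hms : MeasurableSet {p : Q × V3 | ∫ h, b (p.1, p.2 + h) * pd k φ h =
      - ∫ h, bk (p.1, p.2 + h) * φ h} := measurableSet_eq_fun hm1 hm2
  have key : ∀ᵐ p ∂(ν.prod (volume : Measure V3)), ∫ h, b (p.1, p.2 + h) * pd k φ h =
      - ∫ h, bk (p.1, p.2 + h) * φ h := by
    rw [Measure.ae_prod_iff_ae_ae hms]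
    refine (Measure.ae_ae_comm hms).2 (ae_of_all _ fun x => ?_)
    have hc : HasCompactSupport (fun z => φ (z - x)) :=
      hφc.comp_homeomorph (Homeomorph.subRight x)
    filter_upwards [hw (fun y => φ (y - x)) (hφ.comp (contDiff_id.sub contDiff_const)) hc] with q hq
    simp_rw [pd_shift] at hq
    rw [← integral_add_left_eq_self _ x, ← integral_add_left_eq_self (fun y => bk (q, y) * _) x]
      at hq
    simpa using hq
  filter_upwards [key] with p hp
  rw [hp, mul_neg]

lemma CC_hasFDerivAt {a b : Q × V3 → ℝ} {bk : Fin 3 → Q × V3 → ℝ}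
    (hma : Measurable a) (hmb : Measurable b) (hmbk : ∀ k, Measurable (bk k))
    (ha : MemLp a 2 (ν.prod volume)) (hb : MemLp b 2 (ν.prod volume))
    (hbk : ∀ k, MemLp (bk k) 2 (ν.prod volume))
    (hw : ∀ k, ∀ φ : V3 → ℝ, ContDiff ℝ (⊤ : ℕ∞) φ → HasCompactSupport φ →
      ∀ᵐ q ∂ν, ∫ x, b (q, x) * pd k φ x = - ∫ x, bk k (q, x) * φ x) (h : V3) :
    HasFDerivAt (CC ν a b) (lform fun k => CC ν a (bk k) h) h :=
  hasFDerivAt_of_weak _ (fun k => CC ν a (bk k)) (CC_continuous hma hmb ha hb)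
    (fun k => CC_continuous hma (hmbk k) ha (hbk k))
    (fun k => CC_weak hma hmb (hmbk k) ha hb (hbk k) k (hw k)) h

lemma CC_contDiff_one {a b : Q × V3 → ℝ} {bk : Fin 3 → Q × V3 → ℝ}
    (hma : Measurable a) (hmb : Measurable b) (hmbk : ∀ k, Measurable (bk k))
    (ha : MemLp a 2 (ν.prod volume)) (hb : MemLp b 2 (ν.prod volume))
    (hbk : ∀ k, MemLp (bk k) 2 (ν.prod volume))
    (hw : ∀ k, ∀ φ : V3 → ℝ, ContDiff ℝ (⊤ : ℕ∞) φ → HasCompactSupport φ →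
      ∀ᵐ q ∂ν, ∫ x, b (q, x) * pd k φ x = - ∫ x, bk k (q, x) * φ x) :
    ContDiff ℝ 1 (CC ν a b) :=
  contDiff_one_iff_hasFDerivAt.2 ⟨fun h => lform fun k => CC ν a (bk k) h,
    lform_continuous.comp (continuous_pi fun k => CC_continuous hma (hmbk k) ha (hbk k)),
    CC_hasFDerivAt hma hmb hmbk ha hb hbk hw⟩

lemma CC_contDiff_two {a b : Q × V3 → ℝ} {ak bk : Fin 3 → Q × V3 → ℝ}
    (hma : Measurable a) (hmb : Measurable b) (hmak : ∀ k, Measurable (ak k))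
    (hmbk : ∀ k, Measurable (bk k))
    (ha : MemLp a 2 (ν.prod volume)) (hb : MemLp b 2 (ν.prod volume))
    (hak : ∀ k, MemLp (ak k) 2 (ν.prod volume))
    (hbk : ∀ k, MemLp (bk k) 2 (ν.prod volume))
    (hwa : ∀ k, ∀ φ : V3 → ℝ, ContDiff ℝ (⊤ : ℕ∞) φ → HasCompactSupport φ →
      ∀ᵐ q ∂ν, ∫ x, a (q, x) * pd k φ x = - ∫ x, ak k (q, x) * φ x)
    (hwb : ∀ k, ∀ φ : V3 → ℝ, ContDiff ℝ (⊤ : ℕ∞) φ → HasCompactSupport φ →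
      ∀ᵐ q ∂ν, ∫ x, b (q, x) * pd k φ x = - ∫ x, bk k (q, x) * φ x) :
    ContDiff ℝ 2 (CC ν a b) := by
  have h2 : (2 : WithTop ℕ∞) = ((1 : ℕ) : WithTop ℕ∞) + 1 := by norm_num
  rw [h2]
  refine contDiff_succ_iff_hasFDerivAt.2 ⟨fun h => lform fun k => CC ν a (bk k) h, ?_,
    CC_hasFDerivAt hma hmb hmbk ha hb hbk hwb⟩
  have : ∀ k, ContDiff ℝ 1 (CC ν a (bk k)) := by
    intro k
    have e : CC ν a (bk k) = fun h => CC ν (bk k) a (-h) := funext fun h => CC_symm a (bk k) h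
    rw [e]
    exact (CC_contDiff_one (hmbk k) hma hmak (hbk k) ha hak hwa).comp contDiff_neg
  unfold lform
  push_cast
  exact ContDiff.sum fun k _ => (this k).smul contDiff_const

end corr2

lemma pd_continuous (k : Fin 3) (φ : V3 → ℝ) (hφ : ContDiff ℝ (⊤ : ℕ∞) φ) :
    Continuous (pd k φ) := by
  have := hφ.continuous_fderiv (by simp)
  unfold pd
  fun_prop

lemma pd_mul (k : Fin 3) (ψ φ : V3 → ℝ) (hψ : ContDiff ℝ (⊤ : ℕ∞) ψ)
    (hφ : ContDiff ℝ (⊤ : ℕ∞) φ) (x : V3) :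
    pd k (fun y => ψ y * φ y) x = ψ x * pd k φ x + φ x * pd k ψ x := by
  unfold pd
  rw [fderiv_fun_mul (hψ.differentiable (by simp)).differentiableAt
    (hφ.differentiable (by simp)).differentiableAt]
  simp

lemma memLp_mul_cs {f g : V3 → ℝ} (hf : MemLp f 2 (volume : Measure V3)) (hg : Continuous g)
    (hgc : HasCompactSupport g) : Integrable (fun x => f x * g x) :=
  hf.integrable_mul (hg.memLp_of_hasCompactSupport (p := 2) hgc)

/-- Product rule for weak derivatives. -/
lemma weak_mul {f fk ψ φ : V3 → ℝ} (k : Fin 3) (hf : MemLp f 2 (volume : Measure V3))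
    (hfk : MemLp fk 2 (volume : Measure V3)) (hψ : ContDiff ℝ (⊤ : ℕ∞) ψ)
    (hφ : ContDiff ℝ (⊤ : ℕ∞) φ) (hφc : HasCompactSupport φ)
    (hw : ∫ x, f x * pd k (fun y => ψ y * φ y) x = - ∫ x, fk x * (ψ x * φ x)) :
    ∫ x, (ψ x * f x) * pd k φ x = - ∫ x, (ψ x * fk x + pd k ψ x * f x) * φ x := by
  have i1 : Integrable (fun x => f x * (ψ x * pd k φ x)) :=
    memLp_mul_cs hf (hψ.continuous.mul (pd_continuous k φ hφ))
      ((hφc.fderiv_apply ℝ _).mul_left)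
  have i2 : Integrable (fun x => f x * (φ x * pd k ψ x)) :=
    memLp_mul_cs hf (hφ.continuous.mul (pd_continuous k ψ hψ)) hφc.mul_right
  have i3 : Integrable (fun x => fk x * (ψ x * φ x)) :=
    memLp_mul_cs hfk (hψ.continuous.mul hφ.continuous) hφc.mul_left
  have e1 : ∫ x, f x * pd k (fun y => ψ y * φ y) x =
      (∫ x, f x * (ψ x * pd k φ x)) + ∫ x, f x * (φ x * pd k ψ x) := by
    rw [← integral_add i1 i2]
    simp_rw [pd_mul k ψ φ hψ hφ, mul_add]
  have e2 : ∫ x, (ψ x * fk x + pd k ψ x * f x) * φ x =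
      (∫ x, fk x * (ψ x * φ x)) + ∫ x, f x * (φ x * pd k ψ x) := by
    rw [← integral_add i3 i2]
    congr 1; funext x; ring
  have e3 : ∫ x, (ψ x * f x) * pd k φ x = ∫ x, f x * (ψ x * pd k φ x) := by
    congr 1; funext x; ring
  rw [e3, e2]
  linarith

lemma memLp_two_of_lintegral {Ω : Type*} [MeasurableSpace Ω] {μ : Measure Ω} [SFinite μ]
    {τ : Measure ℝ} [SFinite τ] {f : (Ω × ℝ) × V3 → ℝ} (hf : Measurable f)
    (h : ∫⁻ ω, (∫⁻ t, ∫⁻ x, (‖f ((ω, t), x)‖₊ : ℝ≥0∞) ^ 2 ∂volume ∂τ) ∂μ < ⊤) :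
    MemLp f 2 ((μ.prod τ).prod volume) := by
  refine ⟨hf.aestronglyMeasurable, ?_⟩
  rw [eLpNorm_lt_top_iff_lintegral_rpow_enorm_lt_top (by simp) (by simp)]
  have hm : Measurable (fun p => ‖f p‖ₑ ^ (2 : ℝ≥0∞).toReal) := by fun_prop
  rw [lintegral_prod _ hm.aemeasurable, lintegral_prod _ hm.lintegral_prod_right'.aemeasurable]
  simpa [enorm_eq_nnnorm] using h

lemma memLp_mul_bdd {α : Type*} [MeasurableSpace α] {m : Measure α} {f : α → ℝ}
    (hf : MemLp f 2 m) {g : α → ℝ} (hg : Measurable g) {C : ℝ} (hC : ∀ x, ‖g x‖ ≤ C) :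
    MemLp (fun x => g x * f x) 2 m := by
  refine hf.of_le_mul (c := C) (hg.aestronglyMeasurable.mul hf.1) (ae_of_all _ fun x => ?_)
  rw [norm_mul]
  exact mul_le_mul_of_nonneg_right (hC x) (norm_nonneg _)

/-- Lemma 2.2: the time averages of the two-point correlation tensor are bounded and continuous
in `h`, and are `C²` in `h` if the field is in `H¹₀(D)` (extended by zero, so in `H¹(ℝ³)`) with
square-integrable expectation of the `H¹` norm. -/
theorem correlation_tensor_regularity
    (D : Set V3) (hD : IsOpen D) (hDbdd : Bornology.IsBounded D)
    (ψ : V3 → ℝ) (hψ : ContDiff ℝ (⊤ : ℕ∞) ψ) (hψc : HasCompactSupport ψ) (hψD : tsupport ψ ⊆ D)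
    (Ω : Type) [MeasurableSpace Ω] (μ : Measure Ω) (hμ : IsProbabilityMeasure μ)
    (T : ℝ) (hT : 0 < T)
    (u : Ω → ℝ → V3 → V3)
    (humeas : Measurable (fun q : Ω × ℝ × V3 => u q.1 q.2.1 q.2.2))
    (huD : ∀ ω t x, x ∉ D → u ω t x = 0)
    (huL2 : (∫⁻ ω, (∫⁻ t in Set.Ioc 0 T, ∫⁻ x in D, (‖u ω t x‖₊ : ℝ≥0∞) ^ 2) ∂μ) < ⊤) :
    (∀ i j : Fin 3,
      Continuous (fun h : V3 => (1 / T) * ∫ t in (0 : ℝ)..T, Gam μ D ψ u i j t h) ∧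
      ∃ M : ℝ, ∀ h : V3, |(1 / T) * ∫ t in (0 : ℝ)..T, Gam μ D ψ u i j t h| ≤ M) ∧
    ((∃ Du : Ω → ℝ → V3 → Fin 3 → Fin 3 → ℝ,
        Measurable (fun q : Ω × ℝ × V3 => Du q.1 q.2.1 q.2.2) ∧
        (∀ᵐ ω ∂μ, ∀ᵐ t ∂(volume.restrict (Set.Ioc 0 T)),
          ∀ φ : V3 → ℝ, ContDiff ℝ (⊤ : ℕ∞) φ → HasCompactSupport φ → ∀ i j : Fin 3,
            ∫ x : V3, u ω t x j * pd i φ x = -∫ x : V3, Du ω t x i j * φ x) ∧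
        (∫⁻ ω, (∫⁻ t in Set.Ioc 0 T, ∫⁻ x : V3,
            ((‖u ω t x‖₊ : ℝ≥0∞) ^ 2 +
              ∑ i : Fin 3, ∑ j : Fin 3, (‖Du ω t x i j‖₊ : ℝ≥0∞) ^ 2)) ∂μ) < ⊤) →
      ∀ i j : Fin 3,
        ContDiff ℝ 2 (fun h : V3 => (1 / T) * ∫ t in (0 : ℝ)..T, Gam μ D ψ u i j t h)) := by
  let ν : Measure (Ω × ℝ) := μ.prod (volume.restrict (Set.Ioc 0 T))
  let U : Fin 3 → (Ω × ℝ) × V3 → ℝ := fun j p => u p.1.1 p.1.2 p.2 j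
  have hUm : ∀ j, Measurable (U j) := by
    intro j
    have h1 : Measurable (fun p : (Ω × ℝ) × V3 => u p.1.1 p.1.2 p.2) :=
      humeas.comp (g := fun q : Ω × ℝ × V3 => u q.1 q.2.1 q.2.2)
        (f := fun p : (Ω × ℝ) × V3 => (p.1.1, p.1.2, p.2)) (by fun_prop)
    have h2 : Measurable (fun v : V3 => v j) := by fun_prop
    exact h2.comp h1
  have hU : ∀ j, MemLp (U j) 2 (ν.prod volume) := by
    intro j
    refine memLp_two_of_lintegral (hUm j) (lt_of_le_of_lt ?_ huL2)
    refine lintegral_mono fun ω => lintegral_mono fun t => ?_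
    rw [← lintegral_indicator hD.measurableSet]
    refine lintegral_mono fun x => ?_
    by_cases hx : x ∈ D
    · simp only [Set.indicator_of_mem hx]
      gcongr
      exact_mod_cast PiLp.norm_apply_le (u ω t x) j
    · simp [Set.indicator_of_notMem hx, U, huD ω t x hx]
  let A : Fin 3 → (Ω × ℝ) × V3 → ℝ := fun i p => ψ p.2 * U i p
  have hψm : Measurable (fun p : (Ω × ℝ) × V3 => ψ p.2) :=
    hψ.continuous.measurable.comp measurable_snd
  obtain ⟨C, hC⟩ := hψc.exists_bound_of_continuous hψ.continuous
  have hAm : ∀ i, Measurable (A i) := fun i => hψm.mul (hUm i)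
  have hA : ∀ i, MemLp (A i) 2 (ν.prod volume) := fun i =>
    memLp_mul_bdd (hU i) hψm (fun p => hC p.2)
  have hF : ∀ i j, (fun h : V3 => (1 / T) * ∫ t in (0 : ℝ)..T, Gam μ D ψ u i j t h) =
      fun h => (1 / T) * CC ν (A i) (U j) h := by
    intro i j
    funext h
    congr 1
    have hi := CC_integrable (hA i) (hU j) h
    unfold CC
    rw [integral_prod _ hi, integral_prod_symm _ hi.integral_prod_left,
      intervalIntegral.integral_of_le hT.le]
    refine integral_congr_ae (ae_of_all _ fun t => ?_)
    unfold Gam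
    refine integral_congr_ae (ae_of_all _ fun ω => ?_)
    dsimp only
    rw [setIntegral_eq_integral_of_forall_compl_eq_zero]
    · refine integral_congr_ae (ae_of_all _ fun x => ?_)
      simp only [A, U]
      ring
    · intro x hx
      simp [huD ω t x hx]
  refine ⟨fun i j => ⟨?_, ?_⟩, ?_⟩
  · rw [hF]
    exact continuous_const.mul (CC_continuous (hAm i) (hUm j) (hA i) (hU j))
  · refine ⟨(1 / T) * ∫ p, (A i p ^ 2 + U j p ^ 2) ∂(ν.prod volume), fun h => ?_⟩
    have := congrFun (hF i j) h
    rw [this, abs_mul, abs_of_pos (by positivity : 0 < 1 / T)]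
    exact mul_le_mul_of_nonneg_left (CC_bdd (hA i) (hU j) h) (by positivity)
  · rintro ⟨Du, hDum, hweak, hDuL2⟩ i j
    rw [hF]
    let W : Fin 3 → Fin 3 → (Ω × ℝ) × V3 → ℝ := fun k j p => Du p.1.1 p.1.2 p.2 k j
    have hWm : ∀ k j, Measurable (W k j) := by
      intro k j
      have h1 : Measurable (fun p : (Ω × ℝ) × V3 => Du p.1.1 p.1.2 p.2) :=
        hDum.comp (g := fun q : Ω × ℝ × V3 => Du q.1 q.2.1 q.2.2)
          (f := fun p : (Ω × ℝ) × V3 => (p.1.1, p.1.2, p.2)) (by fun_prop)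
      exact (measurable_pi_apply j).comp ((measurable_pi_apply k).comp h1)
    have hW : ∀ k j, MemLp (W k j) 2 (ν.prod volume) := by
      intro k j
      refine memLp_two_of_lintegral (hWm k j) (lt_of_le_of_lt ?_ hDuL2)
      refine lintegral_mono fun ω => lintegral_mono fun t => lintegral_mono fun x => ?_
      refine le_trans ?_ le_add_self
      refine le_trans ?_ (Finset.single_le_sum (f := fun k' => ∑ j' : Fin 3,
        (‖Du ω t x k' j'‖₊ : ℝ≥0∞) ^ 2) (fun _ _ => zero_le) (Finset.mem_univ k))
      exact Finset.single_le_sum (f := fun j' =>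
        (‖Du ω t x k j'‖₊ : ℝ≥0∞) ^ 2) (fun _ _ => zero_le) (Finset.mem_univ j)
    have hwU : ∀ j k, ∀ φ : V3 → ℝ, ContDiff ℝ (⊤ : ℕ∞) φ → HasCompactSupport φ →
        ∀ᵐ q ∂ν, ∫ x, U j (q, x) * pd k φ x = - ∫ x, W k j (q, x) * φ x := by
      intro j k φ hφ hφc
      have hpm := (pd_continuous k φ hφ).measurable
      have hφm := hφ.continuous.measurable
      have hm1 : Measurable (fun q : Ω × ℝ => ∫ x, U j (q, x) * pd k φ x) := by
        have : Measurable (fun z : (Ω × ℝ) × V3 => U j z * pd k φ z.2) :=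
          (hUm j).mul (hpm.comp measurable_snd)
        exact this.stronglyMeasurable.integral_prod_right'.measurable
      have hm2 : Measurable (fun q : Ω × ℝ => - ∫ x, W k j (q, x) * φ x) := by
        have : Measurable (fun z : (Ω × ℝ) × V3 => W k j z * φ z.2) :=
          (hWm k j).mul (hφm.comp measurable_snd)
        exact this.stronglyMeasurable.integral_prod_right'.measurable.neg
      refine (Measure.ae_prod_iff_ae_ae (measurableSet_eq_fun hm1 hm2)).2 ?_
      filter_upwards [hweak] with ω hω
      filter_upwards [hω] with t ht
      exact ht φ hφ hφc k j
    have hpψc : ∀ k, HasCompactSupport (pd k ψ) := fun k => hψc.fderiv_apply ℝ _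
    have hpψm : ∀ k, Measurable (fun p : (Ω × ℝ) × V3 => pd k ψ p.2) := fun k =>
      (pd_continuous k ψ hψ).measurable.comp measurable_snd
    have h2 : ContDiff ℝ 2 (CC ν (A i) (U j)) := by
      refine CC_contDiff_two (ak := fun k p => ψ p.2 * W k i p + pd k ψ p.2 * U i p)
        (bk := fun k => W k j) (hAm i) (hUm j) ?_ (fun k => hWm k j) (hA i) (hU j) ?_
        (fun k => hW k j) ?_ (hwU j)
      · intro k
        exact (hψm.mul (hWm k i)).add ((hpψm k).mul (hUm i))
      · intro k
        obtain ⟨C', hC'⟩ := (hpψc k).exists_bound_of_continuous (pd_continuous k ψ hψ)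
        exact (memLp_mul_bdd (hW k i) hψm (fun p => hC p.2)).add
          (memLp_mul_bdd (hU i) (hpψm k) (fun p => hC' p.2))
      · intro k φ hφ hφc
        filter_upwards [hwU i k (fun y => ψ y * φ y) (hψ.mul hφ) hφc.mul_left,
          fiber_memLp (hUm i) (hU i), fiber_memLp (hWm k i) (hW k i)] with q h1 h2 h3
        exact weak_mul k h2 h3 hψ hφ hφc h1
    exact contDiff_const.mul h2
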